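/- arXiv:1411.6982 — 2 statements merged into one kernel-verified Lean document; each statement's English description precedes it below -/
import Mathlib

section
/- Let ρ = (δ_α + δ_β)/2 with α, β, π linearly independent over ℚ, and θ₁ = (δ₀ − δ_π)/2. Then the set of Fourier–Stieltjes coefficients of ρ ∗ θ₁ satisfies {(ρ∗θ₁)^(n) : n ∈ ℤ} = {ρ̂(n) : n odd} ∪ {0}, and its closure equals the closed unit disk. -/
open Complex Real

/-!
On Fourier coefficients, `θ₁` multiplies by `(1 - (-1) ^ n) / 2`, the indicator of the odd integers,
which gives the description of the range. For the closure, write `n = 2k + 1`: the coefficient is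
the image of `k • (α / π, β / π) ∈ (ℝ / ℤ)²` under the continuous map
`x ↦ (e^{-iα - 2πi x₀} + e^{-iβ - 2πi x₁}) / 2`, whose image is the closed unit disk. By Kronecker's
theorem (`kronecker_torus`) these multiples are dense, since an integer relation between `α / π`,
`β / π` and `1` is excluded by linear independence.

Kronecker's theorem itself follows from a comparison of Haar measures. Let `H` be the closed subgroup
generated by `g`. Translation by `g` shows that a character nontrivial at `g` has mean zero both on
`H` and on the whole torus. Trigonometric polynomials being dense among continuous functions, all
continuous functions have the same mean on `H` and on the torus. The distance to `H` thus has mean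
zero on the torus, so it vanishes identically.
-/

open MeasureTheory in
/-- A function that translation by `g` multiplies by a constant `c ≠ 1` has integral zero. -/
lemma integral_eq_zero_of_char {G : Type*} [AddGroup G] [MeasurableSpace G] [MeasurableAdd G]
    (μ : Measure G) [μ.IsAddLeftInvariant] (f : G → ℂ) (g : G) (c : ℂ) (hc : c ≠ 1)
    (h : ∀ x, f (g + x) = c * f x) : ∫ x, f x ∂μ = 0 := by
  have h1 := integral_add_left_eq_self (μ := μ) f g
  simp_rw [h, integral_const_mul] at h1
  have h2 : (c - 1) * ∫ x, f x ∂μ = 0 := by linear_combination h1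
  exact (mul_eq_zero.mp h2).resolve_left (sub_ne_zero.mpr hc)

open MeasureTheory in
lemma continuous_integral_comp {X Y : Type*} [TopologicalSpace X] [CompactSpace X]
    [MeasurableSpace X] [BorelSpace X] [TopologicalSpace Y] [CompactSpace Y]
    (μ : Measure X) [IsProbabilityMeasure μ] {e : X → Y} (he : Continuous e) :
    Continuous (fun f : C(Y, ℂ) => ∫ x, f (e x) ∂μ) := by
  have hint : ∀ f : C(Y, ℂ), Integrable (fun x => f (e x)) μ := fun f =>
    (f.continuous.comp he).integrable_of_hasCompactSupport (HasCompactSupport.of_compactSpace _)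
  refine (LipschitzWith.of_dist_le_mul (K := 1) fun f g => ?_).continuous
  rw [dist_eq_norm, dist_eq_norm, ← integral_sub (hint f) (hint g)]
  refine (norm_integral_le_of_norm_le_const
    (Filter.Eventually.of_forall fun x => (f - g).norm_coe_le_norm (e x))).trans ?_
  simp

lemma mFourier_map_add {d : Type*} [Fintype d] (n : d → ℤ) (x y : UnitAddTorus d) :
    UnitAddTorus.mFourier n (x + y) = UnitAddTorus.mFourier n x * UnitAddTorus.mFourier n y := by
  simp [UnitAddTorus.mFourier, ← Finset.prod_mul_distrib, AddCircle.toCircle_add, smul_add]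

open MeasureTheory in
/-- Kronecker's theorem on the torus `(ℝ / ℤ) ^ d`: the multiples of `g` are dense as soon as no
nontrivial character is trivial at `g`. -/
theorem kronecker_torus {d : Type*} [Fintype d] (g : UnitAddTorus d)
    (hg : ∀ n : d → ℤ, n ≠ 0 → UnitAddTorus.mFourier n g ≠ 1) :
    DenseRange (fun k : ℤ => k • g) := by
  classical
  let H : AddSubgroup (UnitAddTorus d) := (AddSubgroup.zmultiples g).topologicalClosure
  have hHc : IsClosed (H : Set (UnitAddTorus d)) := AddSubgroup.isClosed_topologicalClosure _
  have hgH : g ∈ H :=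
    AddSubgroup.le_topologicalClosure _ (AddSubgroup.mem_zmultiples g)
  have : CompactSpace H := isCompact_iff_compactSpace.mp hHc.isCompact
  let μ : Measure H := Measure.addHaarMeasure ⊤
  let ν : Measure (UnitAddTorus d) := Measure.addHaarMeasure ⊤
  have : IsProbabilityMeasure μ := ⟨Measure.addHaarMeasure_self⟩
  have : IsProbabilityMeasure ν := ⟨Measure.addHaarMeasure_self⟩
  have key : ∀ f : C(UnitAddTorus d, ℂ), ∫ x : H, f x ∂μ = ∫ x, f x ∂ν := by
    have hcl : IsClosed {f : C(UnitAddTorus d, ℂ) | ∫ x : H, f x ∂μ = ∫ x, f x ∂ν} := by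
      apply isClosed_eq
      · exact continuous_integral_comp μ continuous_subtype_val
      · exact continuous_integral_comp ν continuous_id
    have hint1 : ∀ f : C(UnitAddTorus d, ℂ), Integrable (fun x : H => f x) μ := fun f =>
      (f.continuous.comp continuous_subtype_val).integrable_of_hasCompactSupport
        (HasCompactSupport.of_compactSpace _)
    have hint2 : ∀ f : C(UnitAddTorus d, ℂ), Integrable (fun x => f x) ν := fun f =>
      f.continuous.integrable_of_hasCompactSupport (HasCompactSupport.of_compactSpace _)
    have hspan : ∀ f ∈ Submodule.span ℂ (Set.range (UnitAddTorus.mFourier (d := d))),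
        ∫ x : H, f x ∂μ = ∫ x, f x ∂ν := by
      intro f hf
      induction hf using Submodule.span_induction with
      | mem f hf =>
        obtain ⟨n, rfl⟩ := hf
        by_cases hn : n = 0
        · subst hn
          simp [UnitAddTorus.mFourier_zero]
        · rw [integral_eq_zero_of_char μ _ ⟨g, hgH⟩ _ (hg n hn)
            (fun x => mFourier_map_add n g x),
            integral_eq_zero_of_char ν _ g _ (hg n hn) (fun x => mFourier_map_add n g x)]
      | zero => simp
      | add f₁ f₂ _ _ h₁ h₂ =>
        simp only [ContinuousMap.add_apply]
        rw [integral_add (hint1 _) (hint1 _), integral_add (hint2 _) (hint2 _), h₁, h₂]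
      | smul c f _ h =>
        simp only [ContinuousMap.smul_apply]
        rw [integral_smul, integral_smul, h]
    intro f
    have hf : f ∈ (Submodule.span ℂ
        (Set.range (UnitAddTorus.mFourier (d := d)))).topologicalClosure := by
      rw [UnitAddTorus.span_mFourier_closure_eq_top]; trivial
    exact closure_minimal hspan hcl hf
  -- The equality of the two means is now tested on the distance to `H`.
  let D : UnitAddTorus d → ℝ := fun x => Metric.infDist x (H : Set (UnitAddTorus d))
  have hD : Continuous D := Metric.continuous_infDist_pt _
  have h0 : ∫ x, D x ∂ν = 0 := by
    have h1 := key ⟨fun x => (D x : ℂ), by fun_prop⟩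
    have h2 : ∀ x : H, D x = 0 := fun x => Metric.infDist_zero_of_mem x.2
    simp only [ContinuousMap.coe_mk, h2, Complex.ofReal_zero, integral_zero] at h1
    rw [integral_complex_ofReal] at h1
    exact_mod_cast h1.symm
  have hD0 : D = 0 := by
    rw [integral_eq_zero_iff_of_nonneg (fun x => Metric.infDist_nonneg)
      (hD.integrable_of_hasCompactSupport (HasCompactSupport.of_compactSpace _))] at h0
    exact (hD.ae_eq_iff_eq ν continuous_zero).mp h0
  intro x
  have hx : x ∈ (H : Set (UnitAddTorus d)) :=
    (hHc.mem_iff_infDist_zero ⟨g, hgH⟩).mpr (congrFun hD0 x)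
  have hr : Set.range (fun k : ℤ => k • g) = (AddSubgroup.zmultiples g : Set _) := rfl
  rw [hr, ← AddSubgroup.topologicalClosure_coe]
  exact hx

/-- In `(ℝ / ℤ)²`, rotation by `(α / π, β / π)` is rotation by the angles `2α` and `2β`, the step
between consecutive odd multiples of `α` and `β`. -/
lemma dense_orbit (α β : ℝ) (hind : LinearIndependent ℚ ![α, β, π]) :
    DenseRange (fun k : ℤ => k • (![((α / π : ℝ) : UnitAddCircle), ((β / π : ℝ) : UnitAddCircle)] :
      UnitAddTorus (Fin 2))) := by
  apply kronecker_torus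
  intro n hn h
  simp only [UnitAddTorus.mFourier, ContinuousMap.coe_mk, Fin.prod_univ_two, Matrix.cons_val_zero,
    Matrix.cons_val_one, fourier_coe_apply, ← Complex.exp_add] at h
  obtain ⟨m, hm⟩ := Complex.exp_eq_one_iff.mp h
  have hπ : (π : ℂ) ≠ 0 := by exact_mod_cast Real.pi_ne_zero
  have h1 : ((n 0 : ℂ) * α + n 1 * β - m * π) = 0 := by
    push_cast at hm
    field_simp at hm
    linear_combination hm
  have h2 : ((n 0 : ℝ) * α + n 1 * β - m * π) = 0 := by exact_mod_cast h1
  have h3 := Fintype.linearIndependent_iff.mp hind ![(n 0 : ℚ), n 1, -m] (by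
    simp [Fin.sum_univ_three, Rat.smul_def]; linarith)
  apply hn
  funext i
  fin_cases i
  · simpa using h3 0
  · simpa using h3 1

/-- The mean of two unit vectors, in the coordinates `x ↦ (e^{-iα - 2πi x₀}, e^{-iβ - 2πi x₁})`. -/
noncomputable def avgMap (α β : ℝ) (x : UnitAddTorus (Fin 2)) : ℂ :=
  (cexp (-(α : ℂ) * I) * fourier (-1) (x 0) + cexp (-(β : ℂ) * I) * fourier (-1) (x 1)) / 2

lemma continuous_avgMap (α β : ℝ) : Continuous (avgMap α β) := by
  unfold avgMap
  fun_prop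

/-- Every `w = r e^{iφ}` with `r ≤ 1` is the mean of `e^{i(φ + t)}` and `e^{i(φ - t)}`, where
`cos t = r`. -/
lemma avgMap_surj (α β : ℝ) {w : ℂ} (hw : ‖w‖ ≤ 1) : ∃ x, avgMap α β x = w := by
  obtain ⟨t, ht⟩ : ∃ t : ℝ, Real.cos t = ‖w‖ :=
    ⟨Real.arccos ‖w‖, Real.cos_arccos (by linarith [norm_nonneg w]) hw⟩
  have hπ : (π : ℂ) ≠ 0 := by exact_mod_cast Real.pi_ne_zero
  refine ⟨![((-(arg w + t + α) / (2 * π) : ℝ) : UnitAddCircle),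
    ((-(arg w - t + β) / (2 * π) : ℝ) : UnitAddCircle)], ?_⟩
  simp only [avgMap, Matrix.cons_val_zero, Matrix.cons_val_one, fourier_coe_apply,
    ← Complex.exp_add]
  have e1 : -(α : ℂ) * I + 2 * π * I * ((-1 : ℤ) : ℂ) * ((-(arg w + t + α) / (2 * π) : ℝ) : ℂ)
      / ((1 : ℝ) : ℂ) = arg w * I + t * I := by
    push_cast; field_simp; ring
  have e2 : -(β : ℂ) * I + 2 * π * I * ((-1 : ℤ) : ℂ) * ((-(arg w - t + β) / (2 * π) : ℝ) : ℂ)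
      / ((1 : ℝ) : ℂ) = arg w * I + (-t) * I := by
    push_cast; field_simp; ring
  rw [e1, e2, Complex.exp_add, Complex.exp_add]
  conv_rhs => rw [← Complex.norm_mul_exp_arg_mul_I w, ← ht, Complex.ofReal_cos, Complex.cos]
  ring

/-- Along the orbit, `avgMap` takes the values of the coefficients of `ρ` at odd integers. -/
lemma avgMap_orbit (α β : ℝ) (k : ℤ) :
    avgMap α β (k • (![((α / π : ℝ) : UnitAddCircle), ((β / π : ℝ) : UnitAddCircle)] :
      UnitAddTorus (Fin 2))) =
    (cexp (-(((2 * k + 1 : ℤ) : ℂ) * (α : ℂ)) * I) +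
      cexp (-(((2 * k + 1 : ℤ) : ℂ) * (β : ℂ)) * I)) / 2 := by
  have hπ : (π : ℂ) ≠ 0 := by exact_mod_cast Real.pi_ne_zero
  have aux : ∀ γ : ℝ, cexp (-(γ : ℂ) * I) *
      fourier (-1) (k • ((γ / π : ℝ) : UnitAddCircle)) =
      cexp (-(((2 * k + 1 : ℤ) : ℂ) * (γ : ℂ)) * I) := by
    intro γ
    rw [← AddCircle.coe_zsmul, fourier_coe_apply, ← Complex.exp_add]
    congr 1
    push_cast [zsmul_eq_mul]
    field_simp
    ring
  simp only [avgMap, Pi.smul_apply, Matrix.cons_val_zero, Matrix.cons_val_one, aux]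

/-- For ρ = (δ_α+δ_β)/2 with α, β, π linearly independent over ℚ and
θ₁ = (δ₀−δ_π)/2, the Fourier–Stieltjes coefficients of ρ ∗ θ₁ form the set
{ρ̂(n) : n odd} ∪ {0}, whose closure is the closed unit disk. -/
theorem fourier_range_rho_theta1 (M : Type*) [NormedCommRing M] [NormedAlgebra ℂ M]
    [CompleteSpace M]
    (δ : ℝ → M) (hδ : ∀ x y : ℝ, δ x * δ y = δ (x + y))
    (hone : δ 0 = 1) (hper : ∀ x : ℝ, δ (x + 2 * π) = δ x)
    (F : ℤ → (M →ₐ[ℂ] ℂ))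
    (hF : ∀ (n : ℤ) (x : ℝ), F n (δ x) = Complex.exp (-((n : ℂ) * (x : ℂ)) * Complex.I))
    (α β : ℝ)
    (hα : α ∈ Set.Ioo (0 : ℝ) (2 * π)) (hβ : β ∈ Set.Ioo (0 : ℝ) (2 * π))
    (hind : LinearIndependent ℚ ![α, β, π]) :
    {w : ℂ | ∃ n : ℤ, w = F n (((1 / 2 : ℂ) • (δ α + δ β)) * ((1 / 2 : ℂ) • (δ 0 - δ π)))} =
      {w : ℂ | ∃ n : ℤ, Odd n ∧ w = F n ((1 / 2 : ℂ) • (δ α + δ β))} ∪ {0} ∧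
    closure {w : ℂ | ∃ n : ℤ,
        w = F n (((1 / 2 : ℂ) • (δ α + δ β)) * ((1 / 2 : ℂ) • (δ 0 - δ π)))} =
      Metric.closedBall (0 : ℂ) 1 := by
  have hρ : ∀ n : ℤ, F n ((1 / 2 : ℂ) • (δ α + δ β)) =
      (cexp (-((n : ℂ) * (α : ℂ)) * I) + cexp (-((n : ℂ) * (β : ℂ)) * I)) / 2 := by
    intro n
    rw [map_smul, map_add, hF, hF, smul_eq_mul]
    ring
  have hθ : ∀ n : ℤ, F n ((1 / 2 : ℂ) • (δ 0 - δ π)) = (1 - (-1) ^ n) / 2 := by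
    intro n
    have hexp : cexp (-((n : ℂ) * (π : ℂ)) * I) = (-1) ^ n := by
      rw [show -((n : ℂ) * (π : ℂ)) * I = ((-n : ℤ) : ℂ) * (π * I) by push_cast; ring,
        Complex.exp_int_mul, Complex.exp_pi_mul_I, zpow_neg, ← inv_zpow]
      norm_num
    rw [map_smul, map_sub, hF, hF, hexp, smul_eq_mul]
    simp
    ring
  have hset : {w : ℂ | ∃ n : ℤ,
        w = F n (((1 / 2 : ℂ) • (δ α + δ β)) * ((1 / 2 : ℂ) • (δ 0 - δ π)))} =
      {w : ℂ | ∃ n : ℤ, Odd n ∧ w = F n ((1 / 2 : ℂ) • (δ α + δ β))} ∪ {0} := by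
    ext w
    simp only [map_mul, hθ, Set.mem_ofPred_eq, Set.mem_union, Set.mem_singleton_iff]
    constructor
    · rintro ⟨n, rfl⟩
      rcases Int.even_or_odd n with hn | hn
      · right; simp [hn.neg_one_zpow]
      · left; exact ⟨n, hn, by rw [hn.neg_one_zpow]; norm_num⟩
    · rintro (⟨n, hn, rfl⟩ | rfl)
      · exact ⟨n, by rw [hn.neg_one_zpow]; norm_num⟩
      · exact ⟨0, by simp⟩
  refine ⟨hset, ?_⟩
  rw [hset]
  apply subset_antisymm
  · apply closure_minimal _ Metric.isClosed_closedBall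
    rintro w (⟨n, -, rfl⟩ | rfl)
    · have hexp : ∀ x : ℝ, ‖cexp (-((n : ℂ) * (x : ℂ)) * I)‖ = 1 := fun x => by
        rw [show -((n : ℂ) * (x : ℂ)) * I = ((-(n * x) : ℝ) : ℂ) * I by push_cast; ring]
        exact Complex.norm_exp_ofReal_mul_I _
      rw [mem_closedBall_zero_iff, hρ, norm_div, Complex.norm_ofNat, div_le_one two_pos]
      calc _ ≤ _ := norm_add_le _ _
        _ = 2 := by rw [hexp, hexp]; norm_num
    · simp
  · intro w hw
    obtain ⟨x, rfl⟩ := avgMap_surj α β (mem_closedBall_zero_iff.mp hw)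
    refine closure_mono ?_ (image_closure_subset_closure_image (continuous_avgMap α β)
      ⟨x, dense_orbit α β hind x, rfl⟩)
    rintro _ ⟨_, ⟨k, rfl⟩, rfl⟩
    exact Or.inl ⟨2 * k + 1, odd_two_mul_add_one k, by rw [hρ, ← avgMap_orbit]⟩
end

section
/- With notation as above (ν₀ = μ∗θ₀ + r₀·ρ∗θ₁, r₀ = r(μ∗θ₀), α, β, π linearly independent over ℚ), the closure of the Fourier–Stieltjes range {ν̂₀(n) : n ∈ ℤ} equals the closed disk r₀·𝔻̄ = {z ∈ ℂ : |z| ≤ r₀}. -/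
/-!
On even `n` the transform of `ν₀` is that of `μ * θ₀`, a point of the spectrum of `μ * θ₀`, so it
is bounded by the spectral radius `r₀`. On odd `n` it is `r₀ (e^{-inα} + e^{-inβ}) / 2`, again of
norm at most `r₀`. Hence the closure lies in the closed disk.

Conversely, every point of the disk of radius `r₀` has the form `r₀ (e^{-iA} + e^{-iB}) / 2` (the
sum of two unit vectors symmetric about the direction of the point), and the pairs `(nα, nβ)`,
`n` odd, are dense modulo `2π` by the two-dimensional Kronecker theorem applied to `α / π, β / π`.

Kronecker's theorem is reduced to dimension one. Compactness of the torus yields a multiple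
`(s, t)` of `(a, b)`, modulo integers, that is as short as desired; by independence `t / s` is
irrational, so the line `ℝ (s, t)` is dense in the torus by the one-dimensional theorem, and the
integer multiples of `(s, t)` follow this line closely.
-/

open Complex Real

/-- Simultaneous Dirichlet approximation in dimension two, in qualitative form. -/
lemma exists_small_multiple (a b ε : ℝ) (hε : 0 < ε) :
    ∃ m p q : ℤ, m ≠ 0 ∧ |m * a - p| < ε ∧ |m * b - q| < ε := by
  have hK : IsCompact (Set.Icc (0 : ℝ) 1 ×ˢ Set.Icc (0 : ℝ) 1) := isCompact_Icc.prod isCompact_Icc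
  obtain ⟨c, -, φ, hφ, hc⟩ := hK.tendsto_subseq
    (x := fun n : ℕ ↦ (Int.fract (n * a), Int.fract (n * b)))
    (fun n ↦ ⟨⟨Int.fract_nonneg _, (Int.fract_lt_one _).le⟩,
      ⟨Int.fract_nonneg _, (Int.fract_lt_one _).le⟩⟩)
  obtain ⟨N, hN⟩ := Metric.cauchySeq_iff.1 hc.cauchySeq ε hε
  have h := hN (N + 1) (by omega) N le_rfl
  have hlt : φ N < φ (N + 1) := hφ (Nat.lt_succ_self N)
  simp only [Function.comp, Prod.dist_eq, Real.dist_eq, max_lt_iff, Int.fract] at h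
  refine ⟨(φ (N + 1) : ℤ) - φ N, ⌊(φ (N + 1) : ℝ) * a⌋ - ⌊(φ N : ℝ) * a⌋,
    ⌊(φ (N + 1) : ℝ) * b⌋ - ⌊(φ N : ℝ) * b⌋, by omega, ?_, ?_⟩
  · refine lt_of_eq_of_lt (congrArg abs ?_) h.1
    push_cast
    ring
  · refine lt_of_eq_of_lt (congrArg abs ?_) h.2
    push_cast
    ring

/-- **Kronecker's theorem** in dimension two: if `a`, `b`, `1` are linearly independent over the
integers, the multiples of `(a, b)` are dense modulo `ℤ²`. -/
lemma kronecker_two (a b : ℝ)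
    (hab : ∀ p q r : ℤ, (p : ℝ) * a + q * b + r = 0 → p = 0 ∧ q = 0)
    (x y ε : ℝ) (hε : 0 < ε) :
    ∃ m p q : ℤ, |m * a - x - p| < ε ∧ |m * b - y - q| < ε := by
  obtain ⟨m, p, q, hm, hs, ht⟩ := exists_small_multiple a b ε hε
  set s : ℝ := m * a - p with hs_def
  set t : ℝ := m * b - q with ht_def
  have hs0 : s ≠ 0 := by
    intro h
    refine hm (hab m 0 (-p) ?_).1
    push_cast
    linarith
  have hirr : Irrational (t / s / 1) := by
    rw [div_one]
    rintro ⟨u, hu⟩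
    have hd : (u.den : ℝ) ≠ 0 := by exact_mod_cast u.den_ne_zero
    rw [Rat.cast_def, div_eq_div_iff hd hs0] at hu
    have h := (hab (u.num * m) (-(u.den * m)) (-(u.num * p) + u.den * q) (by
      push_cast
      rw [hs_def, ht_def] at hu
      linarith)).2
    have hd' : (u.den : ℤ) ≠ 0 := by exact_mod_cast u.den_ne_zero
    exact (neg_ne_zero.2 (mul_ne_zero hd' hm)) h
  obtain ⟨z, hz, hzd⟩ := (dense_addSubgroupClosure_pair_iff.2 hirr).exists_dist_lt
    (y - x * (t / s)) (half_pos hε)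
  obtain ⟨j, k, rfl⟩ := AddSubgroup.mem_closure_pair.1 hz
  rw [Real.dist_eq, abs_sub_comm] at hzd
  simp only [zsmul_eq_mul, mul_one] at hzd
  -- The point `l • (s, t)` of the line agrees with `(x, y)` up to integers and the error `hzd`.
  set l : ℝ := (x + j) / s with hl
  have hls : l * s = x + j := div_mul_cancel₀ _ hs0
  have hlt : l * t = (x + j) * (t / s) := by rw [hl]; ring
  have hr : |(round l : ℝ) - l| ≤ 1 / 2 := by
    rw [abs_sub_comm]; exact abs_sub_round l
  have herr : ∀ v : ℝ, |v| < ε → |((round l : ℝ) - l) * v| < ε / 2 := fun v hv ↦ by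
    rw [abs_mul]
    nlinarith [abs_nonneg v]
  refine ⟨round l * m, round l * p + j, round l * q - k, ?_, ?_⟩
  · have : ((round l * m : ℤ) : ℝ) * a - x - ((round l * p + j : ℤ) : ℝ)
        = ((round l : ℝ) - l) * s := by
      rw [sub_mul, hls, hs_def]; push_cast; ring
    rw [this]
    linarith [herr s hs]
  · have : ((round l * m : ℤ) : ℝ) * b - y - ((round l * q - k : ℤ) : ℝ)
        = ((round l : ℝ) - l) * t + (j * (t / s) + k - (y - x * (t / s))) := by
      rw [sub_mul, hlt, ht_def]; push_cast; ring
    rw [this]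
    exact (abs_add_le _ _).trans_lt (by linarith [herr t ht])

/-- The map `x ↦ e^{-ix}` is `1`-Lipschitz and `2π`-periodic. -/
lemma norm_exp_sub_exp_le (x y : ℝ) (p : ℤ) :
    ‖Complex.exp (-(x : ℂ) * Complex.I) - Complex.exp (-(y : ℂ) * Complex.I)‖
      ≤ |x - y - 2 * π * p| := by
  have h : Complex.exp (-(x : ℂ) * Complex.I) - Complex.exp (-(y : ℂ) * Complex.I)
      = Complex.exp ((-y : ℝ) * Complex.I) *
        (Complex.exp (Complex.I * (-(x - y - 2 * π * p) : ℝ)) - 1) := by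
    rw [mul_sub, mul_one, ← Complex.exp_add]
    congr 1
    · rw [Complex.exp_eq_exp_iff_exists_int]
      exact ⟨-p, by push_cast; ring⟩
    · push_cast; rfl
  rw [h, norm_mul, Complex.norm_exp_ofReal_mul_I, one_mul]
  refine (Real.norm_exp_I_mul_ofReal_sub_one_le).trans ?_
  rw [Real.norm_eq_abs, abs_neg]

/-- Every point of the disk of radius `r` is `r` times the midpoint of two points of the unit
circle. -/
lemma exists_midpoint (r : ℝ) (w : ℂ) (hw : ‖w‖ ≤ r) :
    ∃ A B : ℝ, w = r * ((1 / 2) * (Complex.exp (-(A : ℂ) * Complex.I)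
      + Complex.exp (-(B : ℂ) * Complex.I))) := by
  have hr : 0 ≤ r := (norm_nonneg w).trans hw
  -- The two points sit at angles `arg w ± ψ`; for `r = 0` the junk value `‖w‖ / 0` is harmless.
  have hψ : ‖w‖ = r * Real.cos (Real.arccos (‖w‖ / r)) := by
    rw [Real.cos_arccos (by linarith [div_nonneg (norm_nonneg w) hr]) (div_le_one_of_le₀ hw hr)]
    rcases hr.eq_or_lt with h | h
    · subst h
      simpa using hw
    · field_simp
  set ψ := Real.arccos (‖w‖ / r)
  refine ⟨-(w.arg + ψ), -(w.arg - ψ), ?_⟩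
  have hc : (‖w‖ : ℂ) = r * Complex.cos ψ := by
    rw [← Complex.ofReal_cos, ← Complex.ofReal_mul, ← hψ]
  conv_lhs => rw [← Complex.norm_mul_exp_arg_mul_I w, hc, Complex.cos]
  have e1 : Complex.exp (-((-(w.arg + ψ) : ℝ) : ℂ) * Complex.I)
      = Complex.exp (w.arg * Complex.I) * Complex.exp (ψ * Complex.I) := by
    rw [← Complex.exp_add]; congr 1; push_cast; ring
  have e2 : Complex.exp (-((-(w.arg - ψ) : ℝ) : ℂ) * Complex.I)
      = Complex.exp (w.arg * Complex.I) * Complex.exp (-ψ * Complex.I) := by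
    rw [← Complex.exp_add]; congr 1; push_cast; ring
  rw [e1, e2]
  ring

/-- The closure of the Fourier–Stieltjes range of ν₀ = μ∗θ₀ + r₀·ρ∗θ₁ is the
closed disk of radius r₀ = r(μ∗θ₀). -/
theorem nu0_fourier_range_closure (M : Type*) [NormedCommRing M] [NormedAlgebra ℂ M]
    [CompleteSpace M]
    (δ : ℝ → M) (hδ : ∀ x y : ℝ, δ x * δ y = δ (x + y))
    (hone : δ 0 = 1) (hper : ∀ x : ℝ, δ (x + 2 * π) = δ x)
    (hnorm : ∀ x : ℝ, ‖δ x‖ = 1)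
    (F : ℤ → (M →ₐ[ℂ] ℂ))
    (hF : ∀ (n : ℤ) (x : ℝ), F n (δ x) = Complex.exp (-((n : ℂ) * (x : ℂ)) * Complex.I))
    (α β : ℝ)
    (hα : α ∈ Set.Ioo (0 : ℝ) (2 * π)) (hβ : β ∈ Set.Ioo (0 : ℝ) (2 * π))
    (hind : LinearIndependent ℚ ![α, β, π])
    (θ₀ θ₁ ρ : M)
    (hθ₀ : θ₀ = (1 / 2 : ℂ) • (δ 0 + δ π))
    (hθ₁ : θ₁ = (1 / 2 : ℂ) • (δ 0 - δ π))
    (hρ : ρ = (1 / 2 : ℂ) • (δ α + δ β))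
    (μ : M) (r₀ : ℝ) (hr₀ : r₀ = (spectralRadius ℂ (μ * θ₀)).toReal)
    (ν₀ : M) (hν₀ : ν₀ = μ * θ₀ + (r₀ : ℂ) • (ρ * θ₁)) :
    closure {w : ℂ | ∃ n : ℤ, w = F n ν₀} = Metric.closedBall (0 : ℂ) r₀ := by
  have : NormOneClass M := ⟨by rw [← hone, hnorm]⟩
  have hr0 : 0 ≤ r₀ := hr₀ ▸ ENNReal.toReal_nonneg
  have hspec : ∀ n, ‖F n (μ * θ₀)‖ ≤ r₀ := fun n ↦ by
    have h1 : (‖F n (μ * θ₀)‖₊ : ENNReal) ≤ spectralRadius ℂ (μ * θ₀) :=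
      le_iSup₂ (f := fun k (_ : k ∈ spectrum ℂ (μ * θ₀)) ↦ (‖k‖₊ : ENNReal)) _
        (AlgHom.apply_mem_spectrum (F n) (μ * θ₀))
    have h2 : spectralRadius ℂ (μ * θ₀) ≠ ⊤ :=
      ((spectrum.spectralRadius_le_nnnorm (𝕜 := ℂ) (μ * θ₀)).trans_lt ENNReal.coe_lt_top).ne
    rw [hr₀]
    simpa using ENNReal.toReal_mono h2 h1
  have hπ_even : ∀ m : ℤ, F (m + m) (δ π) = 1 := fun m ↦ by
    rw [hF, Complex.exp_eq_one_iff]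
    exact ⟨-m, by push_cast; ring⟩
  have hπ_odd : ∀ m : ℤ, F (2 * m + 1) (δ π) = -1 := fun m ↦ by
    rw [hF, ← Complex.exp_pi_mul_I, Complex.exp_eq_exp_iff_exists_int]
    exact ⟨-m - 1, by push_cast; ring⟩
  have heven : ∀ m : ℤ, F (m + m) ν₀ = F (m + m) (μ * θ₀) := fun m ↦ by
    have h : F (m + m) θ₁ = 0 := by
      rw [hθ₁, map_smul, map_sub, hπ_even, hone, map_one, sub_self, smul_zero]
    rw [hν₀, map_add, map_smul, map_mul _ ρ, h, mul_zero, smul_zero, add_zero]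
  have hodd : ∀ m : ℤ, F (2 * m + 1) ν₀ = r₀ * ((1 / 2) *
      (Complex.exp (-(((2 * m + 1) * α : ℝ) : ℂ) * Complex.I)
        + Complex.exp (-(((2 * m + 1) * β : ℝ) : ℂ) * Complex.I))) := fun m ↦ by
    have h1 : F (2 * m + 1) θ₁ = 1 := by
      rw [hθ₁, map_smul, map_sub, hπ_odd, hone, map_one, smul_eq_mul]; norm_num
    have h0 : F (2 * m + 1) θ₀ = 0 := by
      rw [hθ₀, map_smul, map_add, hπ_odd, hone, map_one, smul_eq_mul]; norm_num
    rw [hν₀, map_add, map_smul, map_mul, map_mul, h1, h0, hρ, map_smul, map_add, hF, hF]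
    push_cast
    simp only [smul_eq_mul, mul_zero, zero_add, mul_one]
  apply subset_antisymm
  · refine closure_minimal ?_ Metric.isClosed_closedBall
    rintro w ⟨n, rfl⟩
    rw [mem_closedBall_zero_iff]
    obtain ⟨m, rfl | rfl⟩ := n.even_or_odd'
    · rw [two_mul, heven]
      exact hspec _
    · rw [hodd, norm_mul, Complex.norm_real, Real.norm_of_nonneg hr0]
      refine mul_le_of_le_one_right hr0 ?_
      rw [norm_mul]
      refine (mul_le_mul_of_nonneg_left (norm_add_le _ _) (norm_nonneg _)).trans ?_
      rw [← Complex.ofReal_neg, ← Complex.ofReal_neg, Complex.norm_exp_ofReal_mul_I,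
        Complex.norm_exp_ofReal_mul_I]
      norm_num
  · intro w hw
    rw [mem_closedBall_zero_iff] at hw
    obtain ⟨A, B, hAB⟩ := exists_midpoint r₀ w hw
    have hpi := Real.pi_pos
    have hab : ∀ p q r : ℤ, (p : ℝ) * (α / π) + q * (β / π) + r = 0 → p = 0 ∧ q = 0 := by
      intro p q r h
      have h' : (p : ℝ) * α + q * β + r * π = 0 := by
        field_simp at h
        linarith
      have := Fintype.linearIndependent_iff.1 hind ![(p : ℚ), q, r] (by
        simpa [Fin.sum_univ_three, Rat.smul_def] using h')
      exact ⟨by simpa using this 0, by simpa using this 1⟩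
    rw [Metric.mem_closure_iff]
    intro ε hε
    set η : ℝ := ε / (2 * π * (r₀ + 1)) with hη
    have hηε : 2 * π * η * (r₀ + 1) = ε := by rw [hη]; field_simp
    obtain ⟨m, p, q, h1, h2⟩ := kronecker_two (α / π) (β / π) hab
      ((A - α) / (2 * π)) ((B - β) / (2 * π)) η (by positivity)
    refine ⟨_, ⟨2 * m + 1, rfl⟩, ?_⟩
    -- Scaling the approximation by `2π` turns it into one of `(2 m + 1) • (α, β)` by `(A, B)`.
    have scale : ∀ (γ C : ℝ) (k : ℤ), |m * (γ / π) - (C - γ) / (2 * π) - k| < η →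
        ‖Complex.exp (-(((2 * m + 1) * γ : ℝ) : ℂ) * Complex.I)
          - Complex.exp (-(C : ℂ) * Complex.I)‖ ≤ 2 * π * η := fun γ C k h ↦ by
      refine (norm_exp_sub_exp_le _ _ k).trans ?_
      have e : (2 * m + 1) * γ - C - 2 * π * k
          = 2 * π * (m * (γ / π) - (C - γ) / (2 * π) - k) := by field_simp; ring
      rw [e, abs_mul, abs_of_pos (by positivity : 0 < 2 * π)]
      exact mul_le_mul_of_nonneg_left h.le (by positivity)
    have s1 := scale α A p h1
    have s2 := scale β B q h2
    rw [dist_comm, dist_eq_norm, hodd, hAB, ← mul_sub, ← mul_sub, add_sub_add_comm, norm_mul,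
      norm_mul, Complex.norm_real, Real.norm_of_nonneg hr0]
    have s3 := (norm_add_le _ _).trans (add_le_add s1 s2)
    have hηpos : 0 < 2 * π * η := by positivity
    have hhalf : ‖(1 / 2 : ℂ)‖ = 1 / 2 := by norm_num
    rw [hhalf]
    calc _ ≤ r₀ * (1 / 2 * (2 * π * η + 2 * π * η)) := by gcongr
      _ < ε := by linarith
end
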